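/- arXiv:2506.13753 — 2 statements merged into one kernel-verified Lean document; each statement's English description precedes it below -/
import Mathlib

section
/- Let d ≥ 2, let σ be the uniform (rotation-invariant) probability measure on the unit sphere S^{d-1} ⊆ EuclideanSpace ℝ (Fin d), and let e be a fixed unit vector. Then the expected distance from e to the segment joining the origin to a uniformly random point of the sphere is ∫_{u ∈ S^{d-1}} Metric.infDist e (segment ℝ 0 u) dσ(u) = 1/2 + Γ(d/2)² / (2 · Γ((d-1)/2) · Γ((d+1)/2)), where Γ is the Gamma function. (Equivalently, the expectation equals 1/2 + α_{d-1}α_{d+1}/(2α_d²) where α_m = 2π^{m/2}/Γ(m/2) is the surface area of the unit (m-1)-sphere in ℝ^m.) -/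
open MeasureTheory

/-! For `‖x‖ ≤ ‖u‖` one of the segments `[0, u]` and `[0, -u]` has the origin as its point nearest
to `x`, and on the other one the nearest point is the projection of `x` to the line `ℝ ∙ u`. As `u`
and `-u` are equidistributed, the expected distance is the mean of `‖x‖` and of the expected
distance from `x` to the line, which by invariance is `‖x‖` times a constant. That constant is found
by integrating the distance from `x` to the line over `u`, and over `x` with weight
`exp (-‖x‖ ^ 2)`, in both orders: for fixed `u` the Gaussian splits as a product along `ℝ ∙ u` and
its orthogonal complement. -/

open Module Real Submodule
open scoped RealInnerProductSpace

section Geometry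

variable {V : Type*} [NormedAddCommGroup V] [InnerProductSpace ℝ V] {u x : V}

lemma infDist_segment_zero_le_norm (x u : V) : Metric.infDist x (segment ℝ 0 u) ≤ ‖x‖ := by
  simpa using Metric.infDist_le_dist_of_mem (x := x) (left_mem_segment ℝ 0 u)

lemma mem_segment_zero_iff {y : V} : y ∈ segment ℝ 0 u ↔ ∃ t ∈ Set.Icc (0 : ℝ) 1, t • u = y := by
  simp [segment_eq_image']

lemma lipschitzWith_infDist_segment_zero (x : V) :
    LipschitzWith 1 fun u ↦ Metric.infDist x (segment ℝ 0 u) := by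
  refine LipschitzWith.of_le_add fun u v ↦ ?_
  rw [← sub_le_iff_le_add, Metric.le_infDist ⟨0, left_mem_segment ℝ 0 v⟩]
  intro y hy
  obtain ⟨t, ht, rfl⟩ := mem_segment_zero_iff.1 hy
  have hdist : dist (t • v) (t • u) ≤ dist u v := by
    rw [dist_smul₀, Real.norm_of_nonneg ht.1, dist_comm]
    exact mul_le_of_le_one_left dist_nonneg ht.2
  have hu := Metric.infDist_le_dist_of_mem (x := x) (mem_segment_zero_iff.2 ⟨t, ht, rfl⟩ :
    t • u ∈ segment ℝ 0 u)
  linarith [dist_triangle x (t • v) (t • u)]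

lemma infDist_segment_zero_of_inner_nonpos (h : ⟪u, x⟫ ≤ 0) :
    Metric.infDist x (segment ℝ 0 u) = ‖x‖ := by
  refine (infDist_segment_zero_le_norm x u).antisymm ?_
  rw [Metric.le_infDist ⟨0, left_mem_segment ℝ 0 u⟩]
  intro y hy
  obtain ⟨t, ht, rfl⟩ := mem_segment_zero_iff.1 hy
  rw [dist_eq_norm, ← sq_le_sq₀ (norm_nonneg _) (norm_nonneg _), norm_sub_sq_real,
    real_inner_smul_right, real_inner_comm]
  linarith [mul_nonpos_of_nonneg_of_nonpos ht.1 h, sq_nonneg ‖t • u‖]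

lemma infDist_segment_zero_of_inner_nonneg (h₀ : 0 ≤ ⟪u, x⟫) (h₁ : ⟪u, x⟫ ≤ ‖u‖ ^ 2) :
    Metric.infDist x (segment ℝ 0 u) = ‖(ℝ ∙ u)ᗮ.starProjection x‖ := by
  apply le_antisymm
  · have hmem : (ℝ ∙ u).starProjection x ∈ segment ℝ 0 u := by
      rw [starProjection_singleton]
      exact mem_segment_zero_iff.2
        ⟨_, ⟨div_nonneg h₀ (sq_nonneg _), div_le_one_of_le₀ h₁ (sq_nonneg _)⟩, rfl⟩
    simpa [starProjection_orthogonal, dist_eq_norm] using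
      Metric.infDist_le_dist_of_mem (x := x) hmem
  · rw [Metric.le_infDist ⟨0, left_mem_segment ℝ 0 u⟩]
    intro y hy
    obtain ⟨t, -, rfl⟩ := mem_segment_zero_iff.1 hy
    have hproj : (ℝ ∙ u)ᗮ.starProjection (x - t • u) = (ℝ ∙ u)ᗮ.starProjection x := by
      rw [map_sub, map_smul, starProjection_orthogonalComplement_singleton_eq_zero, smul_zero,
        sub_zero]
    rw [dist_eq_norm, ← hproj]
    exact norm_starProjection_apply_le _ _

lemma norm_starProjection_orthogonal_span_singleton_map (O : V ≃ₗᵢ[ℝ] V) (u x : V) :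
    ‖(ℝ ∙ O u)ᗮ.starProjection (O x)‖ = ‖(ℝ ∙ u)ᗮ.starProjection x‖ := by
  simp only [starProjection_orthogonal, sub_apply,
    ContinuousLinearMap.id_apply, starProjection_singleton, O.inner_map_map, O.norm_map,
    ← map_smul, ← map_sub]

lemma infDist_segment_zero_add_infDist_segment_zero_neg (h : ‖x‖ ≤ ‖u‖) :
    Metric.infDist x (segment ℝ 0 u) + Metric.infDist x (segment ℝ 0 (-u)) =
      ‖x‖ + ‖(ℝ ∙ u)ᗮ.starProjection x‖ := by
  have hinner : |⟪u, x⟫| ≤ ‖u‖ ^ 2 := by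
    rw [sq]
    exact (abs_real_inner_le_norm u x).trans (by gcongr)
  rcases le_total 0 ⟪u, x⟫ with hux | hux
  · rw [infDist_segment_zero_of_inner_nonneg hux ((le_abs_self _).trans hinner),
      infDist_segment_zero_of_inner_nonpos (by simpa [inner_neg_left] using hux), add_comm]
  · rw [infDist_segment_zero_of_inner_nonpos hux,
      infDist_segment_zero_of_inner_nonneg (u := -u) (by simpa [inner_neg_left] using hux)
        (by simpa [inner_neg_left] using (neg_le_abs _).trans hinner)]
    simpa only [LinearIsometryEquiv.coe_neg, map_neg, norm_neg, add_right_inj] using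
      norm_starProjection_orthogonal_span_singleton_map (.neg ℝ) u x

lemma exists_linearIsometryEquiv_apply_eq {y : V} (h : ‖x‖ = ‖y‖) :
    ∃ O : V ≃ₗᵢ[ℝ] V, O x = y :=
  ⟨(ℝ ∙ (x - y))ᗮ.reflection, reflection_sub h⟩

end Geometry

section Gaussian

variable {V : Type*} [NormedAddCommGroup V] [InnerProductSpace ℝ V] [FiniteDimensional ℝ V]
  [MeasurableSpace V] [BorelSpace V]

lemma integral_exp_neg_norm_sq :
    ∫ x : V, exp (-‖x‖ ^ 2) = π ^ (finrank ℝ V / 2 : ℝ) := by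
  simpa using GaussianFourier.integral_rexp_neg_mul_sq_norm (V := V) one_pos

lemma volume_real_unitBall [Nontrivial V] :
    volume.real (Metric.ball (0 : V) 1) =
      π ^ (finrank ℝ V / 2 : ℝ) / Gamma (finrank ℝ V / 2 + 1) := by
  rw [Measure.real, InnerProductSpace.volume_ball, ENNReal.ofReal_one, one_pow, one_mul,
    ENNReal.toReal_ofReal (by positivity), sqrt_eq_rpow, ← rpow_mul_natCast pi_nonneg]
  ring_nf

lemma integral_norm_rpow_mul_exp_neg_norm_sq [Nontrivial V] {p : ℝ} (hp : -finrank ℝ V < p) :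
    ∫ x : V, ‖x‖ ^ p * exp (-‖x‖ ^ 2) =
      π ^ (finrank ℝ V / 2 : ℝ) * Gamma ((finrank ℝ V + p) / 2) / Gamma (finrank ℝ V / 2) := by
  have hn : 0 < finrank ℝ V := finrank_pos
  have hradial : ∫ r in Set.Ioi (0 : ℝ), r ^ (finrank ℝ V - 1) • (r ^ p * exp (-r ^ 2)) =
      Gamma ((finrank ℝ V + p) / 2) / 2 := by
    calc
      _ = ∫ r in Set.Ioi (0 : ℝ), r ^ (finrank ℝ V - 1 + p) * exp (-r ^ (2 : ℝ)) := by
        refine setIntegral_congr_fun measurableSet_Ioi fun r hr ↦ ?_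
        simp only [smul_eq_mul, rpow_two, rpow_add hr, ← mul_assoc]
        rw [← rpow_natCast, Nat.cast_pred hn]
      _ = _ := by
        rw [integral_rpow_mul_exp_neg_rpow two_pos (by linarith)]
        ring_nf
  have hG : Gamma (finrank ℝ V / 2 + 1) = finrank ℝ V / 2 * Gamma (finrank ℝ V / 2) :=
    Gamma_add_one (by positivity)
  have hG₀ : Gamma (finrank ℝ V / 2) ≠ 0 := (Gamma_pos_of_pos (by positivity)).ne'
  rw [integral_fun_norm_addHaar volume fun r ↦ r ^ p * exp (-r ^ 2), hradial,
    volume_real_unitBall, hG, nsmul_eq_mul, smul_eq_mul]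
  field_simp

lemma integrable_norm_rpow_mul_exp_neg_norm_sq [Nontrivial V] {p : ℝ} (hp : -finrank ℝ V < p) :
    Integrable fun x : V ↦ ‖x‖ ^ p * exp (-‖x‖ ^ 2) := by
  have hn : 0 < finrank ℝ V := finrank_pos
  have hG : 0 < Gamma (finrank ℝ V / 2) := Gamma_pos_of_pos (by positivity)
  have hG_add : 0 < Gamma ((finrank ℝ V + p) / 2) := Gamma_pos_of_pos (by linarith)
  refine .of_integral_ne_zero ?_
  rw [integral_norm_rpow_mul_exp_neg_norm_sq hp]
  exact (div_pos (mul_pos (rpow_pos_of_pos pi_pos _) hG_add) hG).ne'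

lemma integral_starProjection_orthogonal_mul_exp_neg_norm_sq (K : Submodule ℝ V) (g : V → ℝ) :
    ∫ x : V, g (Kᗮ.starProjection x) * exp (-‖x‖ ^ 2) =
      (∫ y : K, exp (-‖y‖ ^ 2)) * ∫ z : Kᗮ, g z * exp (-‖z‖ ^ 2) := by
  have hpres : MeasurePreserving fun x : V ↦ (K.orthogonalDecomposition x).ofLp :=
    (WithLp.volume_preserving_ofLp K Kᗮ).comp K.orthogonalDecomposition.measurePreserving
  have hemb : MeasurableEmbedding fun x : V ↦ (K.orthogonalDecomposition x).ofLp :=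
    (MeasurableEquiv.toLp 2 (K × Kᗮ)).symm.measurableEmbedding.comp
      K.orthogonalDecomposition.toHomeomorph.measurableEmbedding
  rw [← integral_prod_mul, ← Measure.volume_eq_prod, ← hpres.integral_comp hemb]
  refine integral_congr_ae (.of_forall fun x ↦ ?_)
  have hexp : exp (-‖x‖ ^ 2) = exp (-‖K.orthogonalProjectionOnto x‖ ^ 2) *
      exp (-‖Kᗮ.orthogonalProjectionOnto x‖ ^ 2) := by
    rw [← exp_add, K.norm_sq_eq_add_norm_sq_projection]
    ring_nf
  simp only [orthogonalDecomposition_apply, starProjection_apply, hexp]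
  ring

lemma integral_norm_starProjection_orthogonal_mul_exp_neg_norm_sq (hV : 2 ≤ finrank ℝ V) {u : V}
    (hu : u ≠ 0) :
    ∫ x : V, ‖(ℝ ∙ u)ᗮ.starProjection x‖ * exp (-‖x‖ ^ 2) =
      π ^ (finrank ℝ V / 2 : ℝ) * Gamma (finrank ℝ V / 2) / Gamma ((finrank ℝ V - 1) / 2) := by
  have hspan : finrank ℝ (ℝ ∙ u) = 1 := finrank_span_singleton hu
  have hperp : finrank ℝ (ℝ ∙ u)ᗮ = finrank ℝ V - 1 := by
    have := (ℝ ∙ u).finrank_add_finrank_orthogonal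
    omega
  have : Nontrivial (ℝ ∙ u)ᗮ := nontrivial_of_finrank_pos (R := ℝ) (by omega)
  have hmoment := integral_norm_rpow_mul_exp_neg_norm_sq (V := (ℝ ∙ u)ᗮ) (p := 1)
    (by linarith [(finrank ℝ (ℝ ∙ u)ᗮ).cast_nonneg (α := ℝ)])
  simp only [rpow_one, hperp, Nat.cast_pred (two_pos.trans_le hV), sub_add_cancel] at hmoment
  rw [integral_starProjection_orthogonal_mul_exp_neg_norm_sq (ℝ ∙ u) norm,
    integral_exp_neg_norm_sq, hspan]
  simp only [coe_norm] at hmoment ⊢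
  rw [hmoment, mul_div_assoc, mul_div_assoc, ← mul_assoc, ← rpow_add pi_pos]
  ring_nf

end Gaussian

section Invariant

variable {V : Type*} [NormedAddCommGroup V] [InnerProductSpace ℝ V] [MeasurableSpace V]
  [BorelSpace V] {σ : Measure V}

lemma integral_comp_linearIsometryEquiv (hinv : ∀ O : V ≃ₗᵢ[ℝ] V, σ.map O = σ)
    (O : V ≃ₗᵢ[ℝ] V) (f : V → ℝ) : ∫ u, f (O u) ∂σ = ∫ u, f u ∂σ := by
  conv_rhs => rw [← hinv O]
  exact (O.toHomeomorph.measurableEmbedding.integral_map f).symm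

lemma integral_norm_starProjection_orthogonal_eq_norm_mul
    (hinv : ∀ O : V ≃ₗᵢ[ℝ] V, σ.map O = σ) {e : V} (he : ‖e‖ = 1) (x : V) :
    ∫ u, ‖(ℝ ∙ u)ᗮ.starProjection x‖ ∂σ =
      ‖x‖ * ∫ u, ‖(ℝ ∙ u)ᗮ.starProjection e‖ ∂σ := by
  obtain ⟨O, hO⟩ := exists_linearIsometryEquiv_apply_eq (x := ‖x‖ • e) (y := x)
    (by simp [norm_smul, he])
  rw [← integral_comp_linearIsometryEquiv hinv O, ← integral_const_mul]
  refine integral_congr_ae (.of_forall fun u ↦ ?_)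
  calc
    ‖(ℝ ∙ O u)ᗮ.starProjection x‖ = ‖(ℝ ∙ O u)ᗮ.starProjection (O (‖x‖ • e))‖ := by rw [hO]
    _ = ‖x‖ * ‖(ℝ ∙ u)ᗮ.starProjection e‖ := by
      rw [norm_starProjection_orthogonal_span_singleton_map, map_smul, norm_smul, norm_norm]

lemma integrable_infDist_segment_zero [IsFiniteMeasure σ] (x : V) :
    Integrable (fun u ↦ Metric.infDist x (segment ℝ 0 u)) σ :=
  .of_bound (lipschitzWith_infDist_segment_zero x).continuous.aestronglyMeasurable ‖x‖
    (.of_forall fun u ↦ by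
      simpa [abs_of_nonneg Metric.infDist_nonneg] using infDist_segment_zero_le_norm x u)

lemma measurable_starProjection_orthogonal_span_singleton [SecondCountableTopology V] :
    Measurable fun p : V × V ↦ (ℝ ∙ p.2)ᗮ.starProjection p.1 := by
  simp only [starProjection_orthogonal, sub_apply, ContinuousLinearMap.id_apply,
    starProjection_singleton, RCLike.ofReal_real_eq_id, id]
  fun_prop

lemma integrable_norm_starProjection_orthogonal_span_singleton [SecondCountableTopology V]
    [IsFiniteMeasure σ] (x : V) : Integrable (fun u ↦ ‖(ℝ ∙ u)ᗮ.starProjection x‖) σ :=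
  .of_bound (measurable_starProjection_orthogonal_span_singleton.comp
      measurable_prodMk_left).norm.aestronglyMeasurable ‖x‖
    (.of_forall fun u ↦ by simpa using norm_starProjection_apply_le (ℝ ∙ u)ᗮ x)

lemma integral_infDist_segment_zero_eq_half [SecondCountableTopology V] [IsProbabilityMeasure σ]
    [σ.IsNegInvariant] {x : V} (hx : ∀ᵐ u ∂σ, ‖x‖ ≤ ‖u‖) :
    ∫ u, Metric.infDist x (segment ℝ 0 u) ∂σ =
      (‖x‖ + ∫ u, ‖(ℝ ∙ u)ᗮ.starProjection x‖ ∂σ) / 2 := by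
  have hint : Integrable (fun u ↦ Metric.infDist x (segment ℝ 0 u)) σ :=
    integrable_infDist_segment_zero x
  rw [eq_div_iff two_ne_zero, mul_two]
  calc
    _ = ∫ u, (Metric.infDist x (segment ℝ 0 u) + Metric.infDist x (segment ℝ 0 (-u))) ∂σ := by
      rw [integral_add hint hint.comp_neg,
        integral_neg_eq_self (fun u ↦ Metric.infDist x (segment ℝ 0 u))]
    _ = ∫ u, (‖x‖ + ‖(ℝ ∙ u)ᗮ.starProjection x‖) ∂σ :=
      integral_congr_ae (hx.mono fun _ ↦ infDist_segment_zero_add_infDist_segment_zero_neg)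
    _ = _ := by
      rw [integral_add (integrable_const _)
        (integrable_norm_starProjection_orthogonal_span_singleton x)]
      simp

variable [FiniteDimensional ℝ V]

lemma integrable_norm_starProjection_orthogonal_mul_exp_neg_norm_sq_prod [Nontrivial V]
    [IsFiniteMeasure σ] :
    Integrable (fun p : V × V ↦ ‖(ℝ ∙ p.2)ᗮ.starProjection p.1‖ * exp (-‖p.1‖ ^ 2))
      (volume.prod σ) := by
  have hmoment : Integrable fun x : V ↦ ‖x‖ * exp (-‖x‖ ^ 2) := by
    simpa only [rpow_one] using integrable_norm_rpow_mul_exp_neg_norm_sq (V := V) (p := 1)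
      (by linarith [(finrank ℝ V).cast_nonneg (α := ℝ)])
  refine (hmoment.comp_fst σ).mono'
    (measurable_starProjection_orthogonal_span_singleton.norm.mul
      (by fun_prop)).aestronglyMeasurable (.of_forall fun p ↦ ?_)
  rw [Real.norm_of_nonneg (by positivity)]
  gcongr
  exact norm_starProjection_apply_le _ _

lemma integral_norm_mul_exp_neg_norm_sq_mul_integral_norm_starProjection_orthogonal
    [IsProbabilityMeasure σ] (hV : 2 ≤ finrank ℝ V) (hinv : ∀ O : V ≃ₗᵢ[ℝ] V, σ.map O = σ)
    (hσ : ∀ᵐ u ∂σ, u ≠ 0) {e : V} (he : ‖e‖ = 1) :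
    (∫ x : V, ‖x‖ * exp (-‖x‖ ^ 2)) * ∫ u, ‖(ℝ ∙ u)ᗮ.starProjection e‖ ∂σ =
      π ^ (finrank ℝ V / 2 : ℝ) * Gamma (finrank ℝ V / 2) / Gamma ((finrank ℝ V - 1) / 2) := by
  have : Nontrivial V := nontrivial_of_finrank_pos (R := ℝ) (by omega)
  calc
    _ = ∫ x : V, ∫ u, ‖(ℝ ∙ u)ᗮ.starProjection x‖ * exp (-‖x‖ ^ 2) ∂σ := by
      rw [← integral_mul_const]
      refine integral_congr_ae (.of_forall fun x ↦ ?_)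
      simp only [integral_mul_const,
        integral_norm_starProjection_orthogonal_eq_norm_mul hinv he x]
      ring
    _ = ∫ u, (∫ x : V, ‖(ℝ ∙ u)ᗮ.starProjection x‖ * exp (-‖x‖ ^ 2)) ∂σ :=
      integral_integral_swap integrable_norm_starProjection_orthogonal_mul_exp_neg_norm_sq_prod
    _ = _ := by
      rw [integral_congr_ae (hσ.mono fun u ↦
        integral_norm_starProjection_orthogonal_mul_exp_neg_norm_sq hV)]
      simp

lemma integral_norm_starProjection_orthogonal [IsProbabilityMeasure σ] (hV : 2 ≤ finrank ℝ V)
    (hinv : ∀ O : V ≃ₗᵢ[ℝ] V, σ.map O = σ) (hσ : ∀ᵐ u ∂σ, u ≠ 0) (x : V) :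
    ∫ u, ‖(ℝ ∙ u)ᗮ.starProjection x‖ ∂σ =
      ‖x‖ * (Gamma (finrank ℝ V / 2) ^ 2 /
        (Gamma ((finrank ℝ V - 1) / 2) * Gamma ((finrank ℝ V + 1) / 2))) := by
  have : Nontrivial V := nontrivial_of_finrank_pos (R := ℝ) (by omega)
  obtain ⟨e, he⟩ := exists_norm_eq V zero_le_one
  have hn : (2 : ℝ) ≤ finrank ℝ V := mod_cast hV
  have hmoment : ∫ x : V, ‖x‖ * exp (-‖x‖ ^ 2) = π ^ (finrank ℝ V / 2 : ℝ) *
      Gamma ((finrank ℝ V + 1) / 2) / Gamma (finrank ℝ V / 2) := by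
    simpa only [rpow_one] using
      integral_norm_rpow_mul_exp_neg_norm_sq (V := V) (p := 1) (by linarith)
  have hfubini :=
    integral_norm_mul_exp_neg_norm_sq_mul_integral_norm_starProjection_orthogonal hV hinv hσ he
  have hG : 0 < Gamma ((finrank ℝ V : ℝ) / 2) := Gamma_pos_of_pos (by linarith)
  have hG_pred : 0 < Gamma (((finrank ℝ V : ℝ) - 1) / 2) := Gamma_pos_of_pos (by linarith)
  have hG_succ : 0 < Gamma (((finrank ℝ V : ℝ) + 1) / 2) := Gamma_pos_of_pos (by linarith)
  rw [integral_norm_starProjection_orthogonal_eq_norm_mul hinv he]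
  congr 1
  rw [hmoment] at hfubini
  field_simp at hfubini ⊢
  linarith

theorem stmt10_general (hV : 2 ≤ finrank ℝ V) (σ : Measure V) [IsProbabilityMeasure σ]
    (hsupp : σ (Metric.sphere (0 : V) 1)ᶜ = 0) (hinv : ∀ O : V ≃ₗᵢ[ℝ] V, σ.map O = σ)
    (x : V) (hx : ‖x‖ ≤ 1) :
    ∫ u, Metric.infDist x (segment ℝ 0 u) ∂σ =
      ‖x‖ * (1 / 2 + Gamma (finrank ℝ V / 2) ^ 2 /
        (2 * Gamma ((finrank ℝ V - 1) / 2) * Gamma ((finrank ℝ V + 1) / 2))) := by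
  have hnorm : ∀ᵐ u ∂σ, ‖u‖ = 1 := by
    filter_upwards [mem_ae_iff.2 hsupp] with u hu using mem_sphere_zero_iff_norm.1 hu
  have hne : ∀ᵐ u ∂σ, u ≠ 0 := hnorm.mono fun u hu ↦ norm_ne_zero_iff.1 (hu ▸ one_ne_zero)
  have : σ.IsNegInvariant := ⟨hinv (.neg ℝ)⟩
  rw [integral_infDist_segment_zero_eq_half (hnorm.mono fun u hu ↦ hx.trans_eq hu.symm),
    integral_norm_starProjection_orthogonal hV hinv hne]
  ring

end Invariant

/-- For the uniform (rotation-invariant) probability measure `σ` on the unit sphere of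
`EuclideanSpace ℝ (Fin d)` and a fixed unit vector `e`, the expected distance from `e`
to the segment joining the origin to a uniformly random point of the sphere equals
`1/2 + Γ(d/2)² / (2 Γ((d-1)/2) Γ((d+1)/2))`. -/
theorem stmt10 {d : ℕ} (hd : 2 ≤ d)
    (σ : Measure (EuclideanSpace ℝ (Fin d))) [IsProbabilityMeasure σ]
    (hsupp : σ (Metric.sphere (0 : EuclideanSpace ℝ (Fin d)) 1)ᶜ = 0)
    (hinv : ∀ O : EuclideanSpace ℝ (Fin d) ≃ₗᵢ[ℝ] EuclideanSpace ℝ (Fin d),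
      Measure.map O σ = σ)
    (e : EuclideanSpace ℝ (Fin d)) (he : ‖e‖ = 1) :
    ∫ u, Metric.infDist e (segment ℝ 0 u) ∂σ =
      1 / 2 + Real.Gamma ((d : ℝ) / 2) ^ 2 /
        (2 * Real.Gamma (((d : ℝ) - 1) / 2) * Real.Gamma (((d : ℝ) + 1) / 2)) := by
  simpa [he] using stmt10_general (by simpa using hd) σ hsupp hinv e he.le
end

section
/- Let d ≥ 1, let r > 0, let I be a finite index set, and for each i ∈ I let a_i, b_i ∈ EuclideanSpace ℝ (Fin d). Then the Lebesgue volume of the closed r-neighborhood of the union of the segments satisfies volume( Metric.cthickening r (⋃_{i ∈ I} segment ℝ (a_i) (b_i)) ) ≤ Σ_{i ∈ I} ENNReal.ofReal( ω_d · r^d + ‖b_i - a_i‖ · ω_{d-1} · r^{d-1} ), where ω_m = π^{m/2} / Γ(m/2 + 1) is the volume of the m-dimensional unit ball (ω_0 = 1). -/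
/-- `ω_m = π^(m/2) / Γ(m/2 + 1)`, the Lebesgue volume of the unit ball of `ℝ^m`. -/
noncomputable def unitBallVol (m : ℕ) : ℝ :=
  Real.pi ^ ((m : ℝ) / 2) / Real.Gamma ((m : ℝ) / 2 + 1)

/-!
The `r`-neighbourhood of a segment `[a, a + L u]`, with `u` a unit vector, is a capsule. Cut the
ball of radius `r` along the hyperplane `uᗮ`: the capsule is covered by the back half placed at `a`,
the front half placed at `a + L u`, and a solid cylinder of length `L` and radius `r` in between.
The two halves together have the volume of one ball, and the cylinder is a product
`[0, L] × closedBall 0 r` in the orthogonal decomposition `ℝ u × uᗮ`.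
Subadditivity of the volume handles the union of several segments.
-/

open MeasureTheory Metric Module Set
open scoped Pointwise RealInnerProductSpace

theorem unitBallVol_nonneg (m : ℕ) : 0 ≤ unitBallVol m :=
  div_nonneg (by positivity) (Real.Gamma_nonneg_of_nonneg (by positivity))

theorem cthickening_biUnion_finset {α ι : Type*} [PseudoEMetricSpace α] (r : ℝ) (I : Finset ι)
    (s : ι → Set α) : cthickening r (⋃ i ∈ I, s i) = ⋃ i ∈ I, cthickening r (s i) := by
  classical
  induction I using Finset.induction_on with
  | empty => simp
  | insert i I _ ih => rw [Finset.set_biUnion_insert, Finset.set_biUnion_insert,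
      cthickening_union, ih]

section NormedSpace

variable {V : Type*} [NormedAddCommGroup V] [NormedSpace ℝ V]

theorem exists_norm_eq_one_and_eq_norm_smul [Nontrivial V] (v : V) :
    ∃ u : V, ‖u‖ = 1 ∧ v = ‖v‖ • u := by
  rcases eq_or_ne v 0 with rfl | hv
  · obtain ⟨u, hu⟩ := exists_norm_eq V zero_le_one
    exact ⟨u, hu, by simp⟩
  · exact ⟨NormedSpace.normalize v, NormedSpace.norm_normalize hv,
      (NormedSpace.norm_smul_normalize v).symm⟩

theorem segment_add_smul_eq_image_Icc {L : ℝ} (hL : 0 ≤ L) (a u : V) :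
    segment ℝ a (a + L • u) = (fun c : ℝ ↦ a + c • u) '' Icc 0 L := by
  have h_line : ⇑(AffineMap.lineMap a (a + u) : ℝ →ᵃ[ℝ] V) = fun c : ℝ ↦ a + c • u := by
    ext c
    simp [AffineMap.lineMap_apply, add_comm]
  have h_image := image_segment ℝ (AffineMap.lineMap a (a + u) : ℝ →ᵃ[ℝ] V) 0 L
  simpa only [segment_eq_Icc hL, h_line, zero_smul, add_zero] using h_image.symm

theorem mem_cthickening_segment_add_smul {L r : ℝ} (hL : 0 ≤ L) (hr : 0 ≤ r) {a u x : V} :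
    x ∈ cthickening r (segment ℝ a (a + L • u)) ↔ ∃ c ∈ Icc 0 L, ‖x - a - c • u‖ ≤ r := by
  have h_compact : IsCompact ((fun c : ℝ ↦ a + c • u) '' Icc 0 L) :=
    isCompact_Icc.image (by fun_prop)
  rw [segment_add_smul_eq_image_Icc hL, h_compact.cthickening_eq_biUnion_closedBall hr]
  simp only [mem_iUnion₂, exists_mem_image, mem_closedBall_iff_norm, exists_prop, sub_sub]

end NormedSpace

section InnerProductSpace

variable {E : Type*} [NormedAddCommGroup E] [InnerProductSpace ℝ E] {u : E} {L r : ℝ}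

/-- The solid cylinder of length `L` and radius `r` around the segment from `0` to `L • u`,
for a unit vector `u`. -/
def solidCylinder (u : E) (L r : ℝ) : Set E :=
  {x | ⟪u, x⟫ ∈ Icc 0 L ∧ (ℝ ∙ u)ᗮ.orthogonalProjectionOnto x ∈ closedBall 0 r}

theorem norm_sub_smul_sq_of_norm_eq_one (hu : ‖u‖ = 1) (x : E) (c : ℝ) :
    ‖x - c • u‖ ^ 2 = (⟪u, x⟫ - c) ^ 2 + ‖(ℝ ∙ u)ᗮ.orthogonalProjectionOnto x‖ ^ 2 := by
  have h_along : (ℝ ∙ u).starProjection (x - c • u) = (⟪u, x⟫ - c) • u := by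
    rw [Submodule.starProjection_unit_singleton ℝ hu, inner_sub_right, real_inner_smul_right,
      real_inner_self_eq_norm_sq, hu, one_pow, mul_one]
  have h_across : (ℝ ∙ u)ᗮ.orthogonalProjectionOnto (x - c • u) =
      (ℝ ∙ u)ᗮ.orthogonalProjectionOnto x := by
    rw [map_sub, map_smul,
      Submodule.orthogonalProjectionOnto_orthogonalComplement_singleton_eq_zero,
      smul_zero, sub_zero]
  rw [Submodule.norm_sq_eq_add_norm_sq_projection _ (ℝ ∙ u), h_across,
    ← Submodule.norm_coe, ← Submodule.starProjection_apply, h_along, norm_smul, hu, mul_one,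
    Real.norm_eq_abs, sq_abs]

theorem norm_sub_smul_le_norm_sub_smul (hu : ‖u‖ = 1) {x : E} {c c' : ℝ}
    (h : |⟪u, x⟫ - c'| ≤ |⟪u, x⟫ - c|) : ‖x - c' • u‖ ≤ ‖x - c • u‖ := by
  rw [← sq_le_sq₀ (norm_nonneg _) (norm_nonneg _), norm_sub_smul_sq_of_norm_eq_one hu,
    norm_sub_smul_sq_of_norm_eq_one hu]
  gcongr ?_ + _
  exact sq_le_sq.2 h

theorem norm_orthogonalProjectionOnto_le_norm_sub_smul (u x : E) (c : ℝ) :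
    ‖(ℝ ∙ u)ᗮ.orthogonalProjectionOnto x‖ ≤ ‖x - c • u‖ := by
  simpa [Submodule.orthogonalProjectionOnto_orthogonalComplement_singleton_eq_zero] using
    (ℝ ∙ u)ᗮ.norm_orthogonalProjectionOnto_apply_le (x - c • u)

theorem cthickening_segment_subset_union_solidCylinder (hu : ‖u‖ = 1) (hL : 0 ≤ L) (hr : 0 ≤ r)
    (a : E) :
    cthickening r (segment ℝ a (a + L • u)) ⊆
      (a +ᵥ (closedBall 0 r ∩ {x | ⟪u, x⟫ < 0})) ∪
        ((a + L • u) +ᵥ (closedBall 0 r \ {x | ⟪u, x⟫ < 0})) ∪ (a +ᵥ solidCylinder u L r) := by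
  intro x hx
  obtain ⟨c, ⟨hc₀, hcL⟩, hxc⟩ := (mem_cthickening_segment_add_smul hL hr).1 hx
  have h_end : ⟪u, x - (a + L • u)⟫ = ⟪u, x - a⟫ - L := by
    simp [← sub_sub, inner_sub_right, real_inner_smul_right, hu]
  simp only [mem_union, mem_vadd_set_iff_neg_vadd_mem, vadd_eq_add, neg_add_eq_sub, solidCylinder,
    mem_inter_iff, mem_sdiff, mem_ofPred_eq, mem_closedBall_zero_iff, h_end, not_lt]
  rw [← sub_sub x a]
  generalize x - a = y at *
  rcases lt_or_ge ⟪u, y⟫ 0 with h_back | h_nonneg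
  · refine .inl (.inl ⟨le_trans ?_ hxc, h_back⟩)
    simpa using norm_sub_smul_le_norm_sub_smul hu (c' := 0)
      (abs_le_abs_of_nonpos (by linarith) (by linarith))
  rcases le_or_gt ⟪u, y⟫ L with h_le | h_front
  · exact .inr ⟨⟨h_nonneg, h_le⟩, (norm_orthogonalProjectionOnto_le_norm_sub_smul u y c).trans hxc⟩
  · refine .inl (.inr ⟨le_trans ?_ hxc, by linarith⟩)
    exact norm_sub_smul_le_norm_sub_smul hu (abs_le_abs_of_nonneg (by linarith) (by linarith))

variable [FiniteDimensional ℝ E] [MeasurableSpace E] [BorelSpace E]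

-- Dimension `0`, which `InnerProductSpace.volume_closedBall` excludes, occurs as `uᗮ` in a line.
theorem volume_closedBall_eq_unitBallVol (x : E) (hr : 0 ≤ r) :
    volume (closedBall x r) = ENNReal.ofReal (unitBallVol (finrank ℝ E) * r ^ finrank ℝ E) := by
  rcases subsingleton_or_nontrivial E with hE | hE
  · have h_nonempty : (parallelepiped (stdOrthonormalBasis ℝ E)).Nonempty :=
      ⟨0, (mem_parallelepiped_iff _ _).2 ⟨0, left_mem_Icc.2 zero_le_one, by simp⟩⟩
    have h_ball : closedBall x r = parallelepiped (stdOrthonormalBasis ℝ E) :=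
      Subsingleton.eq_univ_of_nonempty (nonempty_closedBall.2 hr) |>.trans
        (Subsingleton.eq_univ_of_nonempty h_nonempty).symm
    rw [h_ball, OrthonormalBasis.volume_parallelepiped]
    simp [unitBallVol, finrank_zero_of_subsingleton]
  · have h_sqrt : √Real.pi ^ finrank ℝ E = Real.pi ^ ((finrank ℝ E : ℝ) / 2) := by
      rw [Real.sqrt_eq_rpow, ← Real.rpow_mul_natCast Real.pi_pos.le, one_div_mul_eq_div]
    rw [InnerProductSpace.volume_closedBall, h_sqrt, ← unitBallVol, ← ENNReal.ofReal_pow hr,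
      ← ENNReal.ofReal_mul (by positivity), mul_comm]

theorem volume_orthogonalProjectionOnto_mem (K : Submodule ℝ E) (s : Set K) (t : Set Kᗮ) :
    volume {x | K.orthogonalProjectionOnto x ∈ s ∧ Kᗮ.orthogonalProjectionOnto x ∈ t} =
      volume s * volume t := by
  have h_pres : MeasurePreserving (K.orthogonalDecomposition.toMeasurableEquiv.trans
      (MeasurableEquiv.toLp 2 (K × Kᗮ)).symm) :=
    K.orthogonalDecomposition.measurePreserving.trans
      (WithLp.volume_preserving_symm_measurableEquiv_toLp_prod K Kᗮ)
  rw [← Measure.prod_prod, ← Measure.volume_eq_prod, ← h_pres.measure_preimage_equiv]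
  congr 1
  ext x
  simp

theorem volume_solidCylinder (hu : ‖u‖ = 1) (hL : 0 ≤ L) (hr : 0 ≤ r) :
    volume (solidCylinder u L r) =
      ENNReal.ofReal (L * unitBallVol (finrank ℝ E - 1) * r ^ (finrank ℝ E - 1)) := by
  have hu₀ : u ≠ 0 := norm_ne_zero_iff.1 (hu ▸ one_ne_zero)
  have h_finrank : finrank ℝ (ℝ ∙ u)ᗮ = finrank ℝ E - 1 := by
    rw [← (ℝ ∙ u).finrank_add_finrank_orthogonal, finrank_span_singleton hu₀,
      Nat.add_sub_cancel_left]
  let e : ℝ ≃ₗᵢ[ℝ] (ℝ ∙ u) := .toSpanUnitSingleton u hu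
  have h_coord (x : E) : e.symm ((ℝ ∙ u).orthogonalProjectionOnto x) = ⟪u, x⟫ := by
    rw [e.symm_apply_eq, Subtype.ext_iff]
    exact Submodule.starProjection_unit_singleton ℝ hu x
  have h_prod : solidCylinder u L r = {x | (ℝ ∙ u).orthogonalProjectionOnto x ∈
      e.symm ⁻¹' Icc 0 L ∧ (ℝ ∙ u)ᗮ.orthogonalProjectionOnto x ∈ closedBall 0 r} := by
    simp only [solidCylinder, mem_preimage, h_coord]
  rw [h_prod, volume_orthogonalProjectionOnto_mem,
    e.symm.measurePreserving.measure_preimage measurableSet_Icc.nullMeasurableSet,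
    volume_closedBall_eq_unitBallVol _ hr, h_finrank,
    Real.volume_Icc, sub_zero, ← ENNReal.ofReal_mul hL, mul_assoc]

theorem volume_cthickening_segment_add_smul_le (hu : ‖u‖ = 1) (hL : 0 ≤ L) (hr : 0 ≤ r) (a : E) :
    volume (cthickening r (segment ℝ a (a + L • u))) ≤
      ENNReal.ofReal (unitBallVol (finrank ℝ E) * r ^ finrank ℝ E +
        L * unitBallVol (finrank ℝ E - 1) * r ^ (finrank ℝ E - 1)) := by
  have h_meas : MeasurableSet {x : E | ⟪u, x⟫ < 0} :=
    (isOpen_lt (by fun_prop) continuous_const).measurableSet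
  have hω := unitBallVol_nonneg
  calc volume (cthickening r (segment ℝ a (a + L • u)))
    _ ≤ volume (closedBall 0 r ∩ {x | ⟪u, x⟫ < 0}) + volume (closedBall 0 r \ {x | ⟪u, x⟫ < 0}) +
        volume (solidCylinder u L r) := by
      grw [cthickening_segment_subset_union_solidCylinder hu hL hr, measure_union_le,
        measure_union_le, measure_vadd, measure_vadd, measure_vadd]
    _ = volume (closedBall (0 : E) r) + volume (solidCylinder u L r) := by
      rw [measure_inter_add_sdiff _ h_meas]
    _ = _ := by
      rw [volume_closedBall_eq_unitBallVol _ hr, volume_solidCylinder hu hL hr,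
        ENNReal.ofReal_add (mul_nonneg (hω _) (by positivity))
          (mul_nonneg (mul_nonneg hL (hω _)) (by positivity))]

theorem volume_cthickening_segment_le [Nontrivial E] (hr : 0 ≤ r) (a b : E) :
    volume (cthickening r (segment ℝ a b)) ≤
      ENNReal.ofReal (unitBallVol (finrank ℝ E) * r ^ finrank ℝ E +
        ‖b - a‖ * unitBallVol (finrank ℝ E - 1) * r ^ (finrank ℝ E - 1)) := by
  obtain ⟨u, hu, h_dir⟩ := exists_norm_eq_one_and_eq_norm_smul (b - a)
  have h_end : a + ‖b - a‖ • u = b := by rw [← h_dir, add_sub_cancel]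
  simpa only [h_end] using volume_cthickening_segment_add_smul_le hu (norm_nonneg (b - a)) hr a

theorem stmt14_general [Nontrivial E] (hr : 0 ≤ r) {ι : Type*} (I : Finset ι) (a b : ι → E) :
    volume (cthickening r (⋃ i ∈ I, segment ℝ (a i) (b i))) ≤
      ∑ i ∈ I, ENNReal.ofReal (unitBallVol (finrank ℝ E) * r ^ finrank ℝ E +
        ‖b i - a i‖ * unitBallVol (finrank ℝ E - 1) * r ^ (finrank ℝ E - 1)) := by
  rw [cthickening_biUnion_finset]
  exact (measure_biUnion_finset_le I _).trans
    (Finset.sum_le_sum fun i _ ↦ volume_cthickening_segment_le hr (a i) (b i))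

end InnerProductSpace

/-- The volume of the closed `r`-neighborhood of a finite union of segments is at most
the sum, over the segments, of the volume of a radius-`r` ball plus that of a
radius-`r` cylinder around the segment. -/
theorem stmt14 {d : ℕ} (hd : 1 ≤ d) (r : ℝ) (hr : 0 < r)
    {ι : Type*} (I : Finset ι) (a b : ι → EuclideanSpace ℝ (Fin d)) :
    MeasureTheory.volume
        (Metric.cthickening r (⋃ i ∈ I, segment ℝ (a i) (b i))) ≤
      ∑ i ∈ I, ENNReal.ofReal
        (unitBallVol d * r ^ d + ‖b i - a i‖ * unitBallVol (d - 1) * r ^ (d - 1)) := by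
  have : NeZero d := ⟨Nat.one_le_iff_ne_zero.1 hd⟩
  simpa only [finrank_euclideanSpace_fin] using stmt14_general hr.le I a b
end
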